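/- arXiv:0805.3237 — 5 statements merged into one kernel-verified Lean document; each statement's English description precedes it below -/
import Mathlib

section
/- Let γ be a work-limited parallelism profile on m processors and let u be a real with 0 < u ≤ γ(m). Let k = 0 if u ≤ γ(1), and otherwise k = max{1 ≤ j ≤ m : γ(j) < u}; note k < m. Then for every family of nonnegative reals a(0), a(1), …, a(m) satisfying a(0) + a(1) + ⋯ + a(m) ≤ 1 and γ(0)·a(0) + γ(1)·a(1) + ⋯ + γ(m)·a(m) ≥ u, one has 0·a(0) + 1·a(1) + ⋯ + m·a(m) ≥ k + (u − γ(k))/(γ(k+1) − γ(k)). (Here a(j) is the duration, inside a unit-length interval, during which the task is executed on exactly j processors; the conclusion lower-bounds the task's total processor use per unit time.) -/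
/-- For a work-limited parallelism profile `γ` on `m` processors
(`γ 0 = 0`, `γ` strictly increasing on `{0,…,m}`, sublinear ratios, nonincreasing
consecutive differences) and a utilization `0 < u ≤ γ m`, with
`k = 0` if `u ≤ γ 1` and otherwise `k = max{1 ≤ j ≤ m : γ j < u}`:
any durations `a 0, …, a m ≥ 0` within a unit interval
(`∑ a j ≤ 1`) achieving work at least `u` (`∑ γ j · a j ≥ u`) have total processor
use `∑ j · a j` at least `k + (u − γ k)/(γ (k+1) − γ k)`. -/
theorem stmt4 (m : ℕ) (hm : 1 ≤ m) (γ : ℕ → ℝ)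
    (h0 : γ 0 = 0)
    (hmono : ∀ j : ℕ, j < m → γ j < γ (j + 1))
    (hratio : ∀ j j' : ℕ, 1 ≤ j → j < j' → j' ≤ m →
      γ j' / γ j < (j' : ℝ) / (j : ℝ))
    (hconv : ∀ j j' : ℕ, 1 ≤ j → j < j' → j' < m →
      γ (j' + 1) - γ j' ≤ γ (j + 1) - γ j)
    (u : ℝ) (hu : 0 < u) (hum : u ≤ γ m)
    (k : ℕ)
    (hk : k = if u ≤ γ 1 then 0 else Nat.findGreatest (fun j => γ j < u) m)
    (a : ℕ → ℝ)
    (ha : ∀ j : ℕ, j ≤ m → 0 ≤ a j)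
    (hsum : ∑ j ∈ Finset.range (m + 1), a j ≤ 1)
    (hwork : u ≤ ∑ j ∈ Finset.range (m + 1), γ j * a j) :
    (k : ℝ) + (u - γ k) / (γ (k + 1) - γ k) ≤
      ∑ j ∈ Finset.range (m + 1), (j : ℝ) * a j := by
  have hD : ∀ i j : ℕ, i ≤ j → j < m → γ (j + 1) - γ j ≤ γ (i + 1) - γ i := by
    intro i j hij hj
    rcases Nat.eq_or_lt_of_le hij with rfl | hlt
    · exact le_rfl
    rcases Nat.eq_zero_or_pos i with rfl | hi
    · have h1 : 0 < γ 1 := by have := hmono 0 (by omega); rw [h0] at this; simpa using this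
      have h2 := hratio 1 2 le_rfl (by norm_num) (by omega)
      rw [div_lt_iff₀ h1] at h2
      norm_num at h2
      have h3 : γ (j + 1) - γ j ≤ γ 2 - γ 1 := by
        rcases Nat.eq_or_lt_of_le (show 1 ≤ j from hlt) with rfl | h
        · exact le_rfl
        · exact hconv 1 j le_rfl h hj
      simp only [zero_add, h0]
      linarith
    · exact hconv i j hi hlt hj
  have hkm : k < m := by
    rw [hk]
    split_ifs with h
    · omega
    · refine lt_of_le_of_ne (Nat.findGreatest_le m) fun he => ?_
      have := Nat.findGreatest_of_ne_zero he (by omega)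
      linarith
  have hd : 0 < γ (k + 1) - γ k := sub_pos.2 (hmono k hkm)
  set d := γ (k + 1) - γ k with hdd
  have hup : ∀ n : ℕ, k + n ≤ m → γ (k + n) ≤ γ k + d * n := by
    intro n
    induction n with
    | zero => intro _; simp
    | succ n ih =>
      intro hn
      have h1 := ih (by omega)
      have h2 := hD k (k + n) (by omega) (by omega)
      rw [← add_assoc]
      push_cast
      linarith
  have hdown : ∀ n i : ℕ, i + n = k → γ i ≤ γ k - d * n := by
    intro n
    induction n with
    | zero => intro i hi; simp at hi; simp [hi]
    | succ n ih =>
      intro i hi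
      have h1 := ih (i + 1) (by omega)
      have h2 := hD i k (by omega) hkm
      push_cast
      linarith
  have htan : ∀ j : ℕ, j ≤ m → γ j ≤ (γ k - d * k) + d * j := by
    intro j hj
    rcases le_total k j with h | h
    · obtain ⟨n, rfl⟩ := Nat.exists_eq_add_of_le h
      have := hup n hj
      push_cast
      linarith
    · obtain ⟨n, hn⟩ := Nat.exists_eq_add_of_le h
      have := hdown n j hn.symm
      have hc : (k : ℝ) = j + n := by exact_mod_cast hn
      rw [hc]
      linarith
  have hc0 : 0 ≤ γ k - d * k := by
    have := htan 0 (by omega)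
    simpa [h0] using this
  have hle : ∑ j ∈ Finset.range (m + 1), γ j * a j ≤
      (γ k - d * k) * ∑ j ∈ Finset.range (m + 1), a j
        + d * ∑ j ∈ Finset.range (m + 1), (j : ℝ) * a j := by
    rw [Finset.mul_sum, Finset.mul_sum, ← Finset.sum_add_distrib]
    refine Finset.sum_le_sum fun j hj => ?_
    have hj' : j ≤ m := by simpa [Nat.lt_succ_iff] using hj
    have := mul_le_mul_of_nonneg_right (htan j hj') (ha j hj')
    linarith
  have h1 := mul_le_mul_of_nonneg_left hsum hc0
  rw [← le_sub_iff_add_le', div_le_iff₀ hd]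
  linarith
end

section
/- (Necessary condition for feasibility.) Consider n tasks on m identical processors; task i has utilization u_i with 0 < u_i ≤ γ_i(m), where γ_i is a work-limited parallelism profile on m processors. For task i let k_i = 0 if u_i ≤ γ_i(1) and otherwise k_i = max{1 ≤ j ≤ m : γ_i(j) < u_i}, and let λ_i = k_i + (u_i − γ_i(k_i))/(γ_i(k_i+1) − γ_i(k_i)). Suppose there exist a real P > 0 and a measurable schedule σ : ℝ → (Fin m → Option (Fin n)) such that for every task i, the integral over [0, P) of s ↦ γ_i(c_i(s)) is at least u_i·P, where c_i(s) denotes the number of processors p with σ(s)(p) = some i. Then λ_1 + λ_2 + ⋯ + λ_n ≤ m. -/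
open MeasureTheory

/-- Discrete measurable-space structure on `Option α`. -/
instance optionMeasurableSpace {α : Type*} [MeasurableSpace α] :
    MeasurableSpace (Option α) := ⊤

theorem key_aux (m : ℕ) (g : ℕ → ℝ) (h0 : g 0 = 0)
    (hmono : ∀ j : ℕ, j < m → g j < g (j + 1))
    (hratio : ∀ j j' : ℕ, 1 ≤ j → j < j' → j' ≤ m → g j' / g j < (j' : ℝ) / (j : ℝ))
    (hconv : ∀ j j' : ℕ, 1 ≤ j → j < j' → j' < m → g (j' + 1) - g j' ≤ g (j + 1) - g j)
    (k : ℕ) (hk : k < m) (c : ℕ) (hc : c ≤ m) :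
    g c - g k ≤ (g (k + 1) - g k) * ((c : ℝ) - k) := by
  have hanti : ∀ j j' : ℕ, j ≤ j' → j' < m → g (j' + 1) - g j' ≤ g (j + 1) - g j := by
    intro j j' hj hj'
    rcases hj.eq_or_lt with rfl | hlt
    · exact le_rfl
    rcases Nat.eq_zero_or_pos j with rfl | hpos
    · have h1 : 0 < g 1 := by
        have := hmono 0 (by omega)
        simpa [h0] using this
      have h2 : g 2 - g 1 ≤ g 1 - g 0 := by
        have := hratio 1 2 le_rfl (by norm_num) (by omega)
        rw [div_lt_iff₀ h1] at this
        norm_num at this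
        linarith
      have h3 : g (j' + 1) - g j' ≤ g 2 - g 1 := by
        rcases Nat.lt_or_ge 1 j' with h | h
        · exact hconv 1 j' le_rfl h hj'
        · have : j' = 1 := by omega
          subst this
          exact le_rfl
      simpa using h3.trans h2
    · exact hconv j j' hpos hlt hj'
  rcases le_total k c with h | h
  · induction c, h using Nat.le_induction with
    | base => simp
    | succ c h ih =>
      have := ih (by omega)
      have h2 := hanti k c h (by omega)
      push_cast
      linarith
  · obtain ⟨e, rfl⟩ := Nat.exists_eq_add_of_le h
    have : ∀ t, t ≤ e → t * (g (c + e + 1) - g (c + e)) ≤ g (c + t) - g c := by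
      intro t
      induction t with
      | zero => simp
      | succ t ih =>
        intro ht
        have h1 := ih (by omega)
        have h2 := hanti (c + t) (c + e) (by omega) hk
        rw [← add_assoc]
        push_cast
        linarith
    have := this e le_rfl
    push_cast
    linarith

/-- Necessary condition for feasibility: if a measurable schedule
`σ` on `m` processors gives every task `i` (with work-limited parallelism profile
`γ i` and utilization `u i`) work at least `u i · P` over `[0, P)`, then
`∑ λᵢ ≤ m`, where `λᵢ = kᵢ + (uᵢ − γᵢ(kᵢ))/(γᵢ(kᵢ+1) − γᵢ(kᵢ))`. -/
theorem stmt5 (n m : ℕ) (hn : 1 ≤ n) (hm : 1 ≤ m)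
    (γ : Fin n → ℕ → ℝ)
    (h0 : ∀ i, γ i 0 = 0)
    (hmono : ∀ i, ∀ j : ℕ, j < m → γ i j < γ i (j + 1))
    (hratio : ∀ i, ∀ j j' : ℕ, 1 ≤ j → j < j' → j' ≤ m →
      γ i j' / γ i j < (j' : ℝ) / (j : ℝ))
    (hconv : ∀ i, ∀ j j' : ℕ, 1 ≤ j → j < j' → j' < m →
      γ i (j' + 1) - γ i j' ≤ γ i (j + 1) - γ i j)
    (u : Fin n → ℝ) (hu : ∀ i, 0 < u i) (hum : ∀ i, u i ≤ γ i m)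
    (k : Fin n → ℕ)
    (hk : ∀ i, k i = if u i ≤ γ i 1 then 0
      else Nat.findGreatest (fun j => γ i j < u i) m)
    (lam : Fin n → ℝ)
    (hlam : ∀ i, lam i =
      (k i : ℝ) + (u i - γ i (k i)) / (γ i (k i + 1) - γ i (k i)))
    (P : ℝ) (hP : 0 < P)
    (σ : ℝ → Fin m → Option (Fin n)) (hσ : Measurable σ)
    (hfeas : ∀ i, u i * P ≤ ∫ s in Set.Ico (0 : ℝ) P,
      γ i ((Finset.univ.filter (fun p => σ s p = some i)).card)) :
    ∑ i, lam i ≤ (m : ℝ) := by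
  have hkm : ∀ i, k i < m := by
    intro i
    rw [hk i]
    split_ifs with h
    · omega
    · refine lt_of_le_of_ne (Nat.findGreatest_le m) fun he => ?_
      have := Nat.findGreatest_of_ne_zero (P := fun j => γ i j < u i) he (by omega)
      exact absurd (hum i) (not_le.mpr this)
  have hd : ∀ i, 0 < γ i (k i + 1) - γ i (k i) := fun i => sub_pos.mpr (hmono i _ (hkm i))
  set c : Fin n → ℝ → ℕ := fun i s => (Finset.univ.filter (fun p => σ s p = some i)).card with hcdef
  have hcm : ∀ i s, c i s ≤ m := fun i s =>
    (Finset.card_le_univ _).trans (by simp)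
  have hsum : ∀ s, ∑ i, (c i s : ℝ) ≤ m := by
    intro s
    have : ∑ i, c i s ≤ m := by
      rw [hcdef]
      simp only
      rw [← Finset.card_biUnion]
      · exact (Finset.card_le_univ _).trans (by simp)
      · intro i _ j _ hij
        simp only [Function.onFun]
        rw [Finset.disjoint_left]
        intro p hp hq
        simp only [Finset.mem_filter, Finset.mem_univ, true_and] at hp hq
        rw [hp] at hq
        exact hij (Option.some.inj hq)
    exact_mod_cast this
  have hint : ∀ i, IntegrableOn (fun s => γ i (c i s)) (Set.Ico 0 P) := by
    intro i
    by_contra hni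
    have h1 := hfeas i
    have h2 : ∫ s in Set.Ico (0 : ℝ) P, γ i (c i s) = 0 := integral_undef hni
    have h3 := mul_pos (hu i) hP
    change u i * P ≤ ∫ s in Set.Ico (0 : ℝ) P, γ i (c i s) at h1
    linarith
  have hconst : ∀ a : ℝ, IntegrableOn (fun _ : ℝ => a) (Set.Ico 0 P) := fun a =>
    integrableOn_const (by simp)
  have hci : ∀ a : ℝ, ∫ _ in Set.Ico (0 : ℝ) P, a = P * a := by
    intro a
    simp [hP.le]
  let f : Fin n → ℝ → ℝ := fun i s =>
    (k i : ℝ) + (γ i (c i s) - γ i (k i)) / (γ i (k i + 1) - γ i (k i))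
  have hfi : ∀ i, IntegrableOn (f i) (Set.Ico 0 P) := fun i =>
    (hconst _).add (((hint i).sub (hconst _)).div_const _)
  have hfint : ∀ i, P * lam i ≤ ∫ s in Set.Ico (0 : ℝ) P, f i s := by
    intro i
    have e : ∫ s in Set.Ico (0 : ℝ) P, f i s = P * k i +
        ((∫ s in Set.Ico (0 : ℝ) P, γ i (c i s)) - P * γ i (k i)) /
          (γ i (k i + 1) - γ i (k i)) := by
      have hq : Integrable (fun s => (γ i (c i s) - γ i (k i)) / (γ i (k i + 1) - γ i (k i)))
          (volume.restrict (Set.Ico 0 P)) := ((hint i).sub (hconst _)).div_const _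
      change ∫ s in Set.Ico (0 : ℝ) P,
        ((k i : ℝ) + (γ i (c i s) - γ i (k i)) / (γ i (k i + 1) - γ i (k i))) = _
      rw [integral_add (hconst _) hq, integral_div,
        integral_sub (hint i) (hconst _), hci, hci]
    rw [e, hlam i, mul_add, ← mul_div_assoc]
    have h1 : u i * P ≤ ∫ s in Set.Ico (0 : ℝ) P, γ i (c i s) := hfeas i
    have := (hd i).le
    gcongr
    linarith
  have hfle : ∀ s, ∑ i, f i s ≤ m := by
    intro s
    refine le_trans (Finset.sum_le_sum fun i _ => ?_) (hsum s)
    have := key_aux m (γ i) (h0 i) (hmono i) (hratio i) (hconv i) (k i) (hkm i) (c i s) (hcm i s)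
    have h2 : (γ i (c i s) - γ i (k i)) / (γ i (k i + 1) - γ i (k i)) ≤ (c i s : ℝ) - k i := by
      rw [div_le_iff₀ (hd i)]
      linarith
    change (k i : ℝ) + (γ i (c i s) - γ i (k i)) / (γ i (k i + 1) - γ i (k i)) ≤ _
    linarith
  have h1 : P * ∑ i, lam i ≤ P * m := by
    calc P * ∑ i, lam i = ∑ i, P * lam i := Finset.mul_sum _ _ _
      _ ≤ ∑ i, ∫ s in Set.Ico (0 : ℝ) P, f i s := Finset.sum_le_sum fun i _ => hfint i
      _ = ∫ s in Set.Ico (0 : ℝ) P, ∑ i, f i s :=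
        (integral_finsetSum _ fun i _ => hfi i).symm
      _ ≤ ∫ _ in Set.Ico (0 : ℝ) P, (m : ℝ) :=
        integral_mono (integrable_finsetSum _ fun i _ => hfi i) (hconst _) hfle
      _ = P * m := hci _
  exact le_of_mul_le_mul_left h1 hP
end

section
/- (Sufficiency: the canonical schedule meets all deadlines.) Consider n sporadic implicit-deadline tasks on m identical processors; task i has an integer period T_i ≥ 1, a worst-case execution time C_i > 0, utilization u_i = C_i/T_i with u_i ≤ γ_i(m), where γ_i is a work-limited parallelism profile on m processors. For task i let k_i = 0 if u_i ≤ γ_i(1) and otherwise k_i = max{1 ≤ j ≤ m : γ_i(j) < u_i}, and let λ_i = k_i + (u_i − γ_i(k_i))/(γ_i(k_i+1) − γ_i(k_i)). If λ_1 + ⋯ + λ_n ≤ m, then there exists a measurable schedule σ : ℝ → (Fin m → Option (Fin n)) that is 1-periodic (σ(s+1) = σ(s) for all s) such that: (a) for every task i and every time s, the number c_i(s) of processors assigned to i satisfies c_i(s) ∈ {k_i, k_i + 1}; and (b) for every task i and every real t, the integral over [t, t + T_i) of s ↦ γ_i(c_i(s)) is at least C_i (so every job of every task, whatever its arrival time,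 receives its full execution requirement before its deadline). -/
open MeasureTheory

lemma aux_card (m : ℕ) (a b x : ℝ) (ha : 0 ≤ a) (hb : b ≤ m) (hab : a ≤ b) (hx0 : 0 ≤ x)
    (hx1 : x < 1) :
    ((Finset.univ.filter (fun p : Fin m => a ≤ (p : ℝ) + x ∧ (p : ℝ) + x < b)).card : ℝ)
      = (b - a) + Int.fract (x - b) - Int.fract (x - a) := by
  have h1 : (Finset.univ.filter (fun p : Fin m => a ≤ (p : ℝ) + x ∧ (p : ℝ) + x < b)).card
      = (Finset.Ico ⌈a - x⌉ ⌈b - x⌉).card := by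
    apply Finset.card_bij (fun (p : Fin m) _ => ((p : ℕ) : ℤ))
    · intro p hp
      simp only [Finset.mem_filter, Finset.mem_univ, true_and] at hp
      rw [Finset.mem_Ico, Int.ceil_le, Int.lt_ceil]
      push_cast
      constructor <;> linarith [hp.1, hp.2]
    · intro p _ q _ h
      apply Fin.ext
      exact_mod_cast h
    · intro z hz
      rw [Finset.mem_Ico, Int.ceil_le, Int.lt_ceil] at hz
      have hz0 : 0 ≤ z := by
        have : (-1 : ℝ) < z := by linarith [hz.1]
        have : (-1 : ℤ) < z := by exact_mod_cast this
        omega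
      have hzm : z < m := by
        have : (z : ℝ) < m := by linarith [hz.2]
        exact_mod_cast this
      have hzz : ((z.toNat : ℕ) : ℤ) = z := Int.toNat_of_nonneg hz0
      have hzr : ((z.toNat : ℕ) : ℝ) = z := by exact_mod_cast congrArg (Int.cast (R := ℝ)) hzz
      refine ⟨⟨z.toNat, by omega⟩, ?_, hzz⟩
      simp only [Finset.mem_filter, Finset.mem_univ, true_and, hzr]
      constructor <;> linarith [hz.1, hz.2]
  have hle : ⌈a - x⌉ ≤ ⌈b - x⌉ := Int.ceil_le_ceil (by linarith)
  have h2 : ((Finset.Ico ⌈a - x⌉ ⌈b - x⌉).card : ℤ) = ⌈b - x⌉ - ⌈a - x⌉ := by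
    rw [Int.card_Ico, Int.toNat_of_nonneg (by omega)]
  have h3 : ((Finset.Ico ⌈a - x⌉ ⌈b - x⌉).card : ℝ) = (⌈b - x⌉ : ℝ) - ⌈a - x⌉ := by
    exact_mod_cast h2
  rw [h1, h3]
  have key : ∀ y : ℝ, (⌈y - x⌉ : ℝ) = y - x + Int.fract (x - y) := by
    intro y
    have : ⌈y - x⌉ = -⌊x - y⌋ := by
      rw [← Int.ceil_neg]; congr 1; ring
    rw [this]; push_cast
    have := Int.self_sub_floor (x - y)
    linarith
  rw [key, key]; ring

lemma aux_int (t c : ℝ) (T : ℕ) :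
    (∫ s in t..(t + T), Int.fract (s - c)) = ∫ s in (0:ℝ)..(0 + T), Int.fract s := by
  rw [intervalIntegral.integral_comp_sub_right (fun s => Int.fract s) c]
  have hp : Function.Periodic (Int.fract : ℝ → ℝ) (T : ℝ) := fun s => Int.fract_add_natCast s T
  have := hp.intervalIntegral_add_eq (t - c) 0
  rw [← this]
  congr 1; ring

lemma aux_fract_ii (t c d : ℝ) :
    IntervalIntegrable (fun s : ℝ => Int.fract (s - c)) volume t d := by
  apply (intervalIntegrable_const (c := (1:ℝ))).mono_fun
  · exact (measurable_fract.comp (measurable_id.sub_const c)).aestronglyMeasurable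
  · refine Filter.Eventually.of_forall fun s => ?_
    simp only [Real.norm_eq_abs, abs_one]
    rw [abs_of_nonneg (Int.fract_nonneg _)]
    exact (Int.fract_lt_one _).le

/-- Sufficiency: the canonical schedule meets all deadlines:
for sporadic implicit-deadline tasks with work-limited parallelism profiles,
if `∑ λᵢ ≤ m` then there is a 1-periodic measurable schedule in which each task
`i` always uses `kᵢ` or `kᵢ + 1` processors and every window `[t, t + Tᵢ)`
provides task `i` at least `Cᵢ` units of execution. -/
theorem stmt6 (n m : ℕ) (hn : 1 ≤ n) (hm : 1 ≤ m)
    (γ : Fin n → ℕ → ℝ)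
    (h0 : ∀ i, γ i 0 = 0)
    (hmono : ∀ i, ∀ j : ℕ, j < m → γ i j < γ i (j + 1))
    (hratio : ∀ i, ∀ j j' : ℕ, 1 ≤ j → j < j' → j' ≤ m →
      γ i j' / γ i j < (j' : ℝ) / (j : ℝ))
    (hconv : ∀ i, ∀ j j' : ℕ, 1 ≤ j → j < j' → j' < m →
      γ i (j' + 1) - γ i j' ≤ γ i (j + 1) - γ i j)
    (T : Fin n → ℕ) (hT : ∀ i, 1 ≤ T i)
    (C : Fin n → ℝ) (hC : ∀ i, 0 < C i)
    (u : Fin n → ℝ) (hu : ∀ i, u i = C i / (T i : ℝ))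
    (hum : ∀ i, u i ≤ γ i m)
    (k : Fin n → ℕ)
    (hk : ∀ i, k i = if u i ≤ γ i 1 then 0
      else Nat.findGreatest (fun j => γ i j < u i) m)
    (lam : Fin n → ℝ)
    (hlam : ∀ i, lam i =
      (k i : ℝ) + (u i - γ i (k i)) / (γ i (k i + 1) - γ i (k i)))
    (hfeas : ∑ i, lam i ≤ (m : ℝ)) :
    ∃ σ : ℝ → Fin m → Option (Fin n),
      Measurable σ ∧
      (∀ s : ℝ, σ (s + 1) = σ s) ∧
      (∀ i, ∀ s : ℝ,
        (Finset.univ.filter (fun p => σ s p = some i)).card = k i ∨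
        (Finset.univ.filter (fun p => σ s p = some i)).card = k i + 1) ∧
      (∀ i, ∀ t : ℝ, C i ≤ ∫ s in Set.Ico t (t + (T i : ℝ)),
        γ i ((Finset.univ.filter (fun p => σ s p = some i)).card)) := by
  classical
  -- basic facts
  have hfac : ∀ i, k i < m ∧ γ i (k i) < u i ∧ u i ≤ γ i (k i + 1) := by
    intro i
    have hupos : 0 < u i := by
      rw [hu]; have := hT i; have := hC i; positivity
    by_cases h : u i ≤ γ i 1
    · have : k i = 0 := by rw [hk, if_pos h]
      rw [this]
      exact ⟨by omega, by rw [h0]; exact hupos, by simpa using h⟩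
    · have hkk : k i = Nat.findGreatest (fun j => γ i j < u i) m := by rw [hk, if_neg h]
      have hlt : γ i (k i) < u i := by
        rw [hkk]
        exact Nat.findGreatest_spec (P := fun j => γ i j < u i) hm (not_le.mp h)
      have hkm : k i ≤ m := by rw [hkk]; exact Nat.findGreatest_le m
      have hkm' : k i < m := by
        rcases hkm.lt_or_eq with h' | h'
        · exact h'
        · rw [h'] at hlt; exact absurd (hum i) (not_le.mpr hlt)
      refine ⟨hkm', hlt, ?_⟩
      have := Nat.findGreatest_is_greatest (P := fun j => γ i j < u i) (n := m) (k := k i + 1)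
        (by omega) (by omega)
      exact not_lt.mp this
  set f : Fin n → ℝ := fun i => (u i - γ i (k i)) / (γ i (k i + 1) - γ i (k i)) with hf
  have hD : ∀ i, 0 < γ i (k i + 1) - γ i (k i) := fun i => by
    have := hfac i; linarith [this.2.1, this.2.2]
  have hf0 : ∀ i, 0 < f i := fun i => div_pos (by linarith [(hfac i).2.1]) (hD i)
  have hf1 : ∀ i, f i ≤ 1 := fun i => (div_le_one (hD i)).2 (by linarith [(hfac i).2.2])
  have hlf : ∀ i, lam i = k i + f i := hlam
  have hl0 : ∀ i, 0 ≤ lam i := fun i => by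
    rw [hlf]; have := hf0 i; positivity
  set a : Fin n → ℝ := fun i => ∑ j ∈ Finset.univ.filter (fun j => j < i), lam j with ha
  set b : Fin n → ℝ := fun i => a i + lam i with hb
  have ha0 : ∀ i, 0 ≤ a i := fun i => Finset.sum_nonneg fun j _ => hl0 j
  have hb' : ∀ i, b i = ∑ j ∈ insert i (Finset.univ.filter (fun j => j < i)), lam j := by
    intro i
    rw [Finset.sum_insert (by simp)]
    simp only [hb, ha]; ring
  have hbm : ∀ i, b i ≤ m := fun i => by
    rw [hb']
    exact (Finset.sum_le_sum_of_subset_of_nonneg (Finset.subset_univ _)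
      (fun j _ _ => hl0 j)).trans hfeas
  have hdis : ∀ i j, i < j → b i ≤ a j := by
    intro i j hij
    rw [hb']
    apply Finset.sum_le_sum_of_subset_of_nonneg
    · intro l hl
      simp only [Finset.mem_insert, Finset.mem_filter, Finset.mem_univ, true_and] at hl ⊢
      rcases hl with rfl | hl
      · exact hij
      · exact hl.trans hij
    · exact fun j _ _ => hl0 j
  let Q : Fin n → Fin m → ℝ → Prop := fun i p s =>
    a i ≤ (p : ℝ) + Int.fract s ∧ (p : ℝ) + Int.fract s < b i
  have huniq : ∀ i j p s, Q i p s → Q j p s → i = j := by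
    intro i j p s hi hj
    rcases lt_trichotomy i j with h | h | h
    · have := hdis i j h; linarith [hi.2, hj.1]
    · exact h
    · have := hdis j i h; linarith [hj.2, hi.1]
  let σ : ℝ → Fin m → Option (Fin n) := fun s p =>
    if h : ∃ i, Q i p s then some h.choose else none
  have hσ : ∀ s p i, σ s p = some i ↔ Q i p s := by
    intro s p i
    simp only [σ]
    split_ifs with h
    · constructor
      · intro e
        have := h.choose_spec
        rwa [Option.some.inj e] at this
      · intro hi
        rw [huniq _ _ _ _ h.choose_spec hi]
    · constructor
      · intro e; cases e
      · intro hi; exact absurd ⟨i, hi⟩ h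
  have hQm : ∀ i p, MeasurableSet {s | Q i p s} := by
    intro i p
    have hm1 : Measurable (fun s : ℝ => (p : ℝ) + Int.fract s) := measurable_fract.const_add _
    exact (measurableSet_le measurable_const hm1).inter (measurableSet_lt hm1 measurable_const)
  have hcard : ∀ i s, ((Finset.univ.filter (fun p => σ s p = some i)).card : ℝ)
      = lam i + Int.fract (s - b i) - Int.fract (s - a i) := by
    intro i s
    have e : (Finset.univ.filter (fun p => σ s p = some i))
        = Finset.univ.filter (fun p : Fin m => a i ≤ (p : ℝ) + Int.fract s ∧
            (p : ℝ) + Int.fract s < b i) := by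
      apply Finset.filter_congr
      intro p _
      exact hσ s p i
    rw [e, aux_card m (a i) (b i) (Int.fract s) (ha0 i) (hbm i)
      (by simp only [hb]; linarith [hl0 i]) (Int.fract_nonneg s) (Int.fract_lt_one s)]
    have hs : ∀ y : ℝ, Int.fract (Int.fract s - y) = Int.fract (s - y) := by
      intro y
      have : Int.fract s - y = (s - y) - (⌊s⌋ : ℤ) := by
        rw [← Int.self_sub_floor]; ring
      rw [this, Int.fract_sub_intCast]
    rw [hs, hs]
    simp only [hb]; ring
  have hca : ∀ i, ∀ s : ℝ,
        (Finset.univ.filter (fun p => σ s p = some i)).card = k i ∨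
        (Finset.univ.filter (fun p => σ s p = some i)).card = k i + 1 := by
    intro i s
    have h := hcard i s
    rw [hlf] at h
    generalize (Finset.univ.filter (fun p => σ s p = some i)).card = c at h
    have q1 := Int.fract_nonneg (s - b i)
    have q2 := Int.fract_lt_one (s - b i)
    have q3 := Int.fract_nonneg (s - a i)
    have q4 := Int.fract_lt_one (s - a i)
    have l1 : (k i : ℝ) < c + 1 := by linarith [hf0 i]
    have l2 : (c : ℝ) < k i + 2 := by linarith [hf1 i]
    have l1' : k i < c + 1 := by exact_mod_cast l1
    have l2' : c < k i + 2 := by exact_mod_cast l2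
    omega
  refine ⟨σ, ?_, ?_, hca, ?_⟩
  · rw [measurable_pi_iff]
    intro p
    apply measurable_to_countable'
    intro y
    cases y with
    | some i =>
      have : (fun s => σ s p) ⁻¹' {some i} = {s | Q i p s} := by
        ext s; exact hσ s p i
      rw [this]; exact hQm i p
    | none =>
      have : (fun s => σ s p) ⁻¹' {none} = (⋃ i, {s | Q i p s})ᶜ := by
        ext s
        simp only [Set.mem_preimage, Set.mem_singleton_iff, Set.mem_compl_iff, Set.mem_iUnion,
          Set.mem_setOf_eq, Option.eq_none_iff_forall_ne_some, ne_eq, hσ, not_exists]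
      rw [this]; exact (MeasurableSet.iUnion fun i => hQm i p).compl
  · intro s
    funext p
    simp only [σ, Q, Int.fract_add_one]
  · intro i t
    set D := γ i (k i + 1) - γ i (k i) with hDdef
    have e : ∀ s, γ i ((Finset.univ.filter (fun p => σ s p = some i)).card)
        = u i + D * (Int.fract (s - b i) - Int.fract (s - a i)) := by
      intro s
      have h := hcard i s
      have hu' : u i = γ i (k i) + f i * D := by
        simp only [hf]; rw [div_mul_cancel₀ _ (hD i).ne']; ring
      rw [hlf] at h
      have h2 : Int.fract (s - b i) - Int.fract (s - a i) =
        ((Finset.univ.filter (fun p => σ s p = some i)).card : ℝ) - k i - f i := by linarith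
      rw [h2, hu']
      rcases hca i s with h' | h' <;> rw [h']
      · ring
      · push_cast; rw [hDdef]; ring
    simp_rw [e]
    rw [MeasureTheory.integral_Ico_eq_integral_Ioc, ← intervalIntegral.integral_of_le
      (by have : (0:ℝ) ≤ T i := Nat.cast_nonneg _
          linarith)]
    rw [intervalIntegral.integral_add intervalIntegrable_const
      (((aux_fract_ii _ _ _).sub (aux_fract_ii _ _ _)).const_mul D),
      intervalIntegral.integral_const_mul,
      intervalIntegral.integral_sub (aux_fract_ii _ _ _) (aux_fract_ii _ _ _),
      aux_int, aux_int, intervalIntegral.integral_const, hu i]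
    have : (0:ℝ) < T i := by exact_mod_cast hT i
    simp only [sub_self, mul_zero, add_zero, add_sub_cancel_left, smul_eq_mul]
    rw [mul_div_cancel₀ _ this.ne']
end

section
/- (Wrap-around construction.) Let m ≥ 1 and n ≥ 1 and let λ_1, …, λ_n ≥ 0 be real numbers with λ_1 + ⋯ + λ_n ≤ m. Then there exists a 1-periodic measurable function σ : ℝ → (Fin m → Option (Fin n)) such that for every i ∈ {1,…,n}: (a) for every time s, the number c_i(s) of processors p with σ(s)(p) = some i satisfies ⌊λ_i⌋ ≤ c_i(s) ≤ ⌊λ_i⌋ + 1; and (b) the Lebesgue measure of {s ∈ [0,1) : c_i(s) = ⌊λ_i⌋ + 1} equals λ_i − ⌊λ_i⌋. (In particular, over every unit-length interval, task i receives total processor time exactly λ_i.) -/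
open MeasureTheory

lemma ceil_aux (k : ℕ) (x : ℝ) (h1 : (k : ℝ) - 1 < x) (h2 : x ≤ k) : ⌈x⌉₊ = k := by
  apply le_antisymm (Nat.ceil_le.2 h2)
  by_contra h
  push Not at h
  have h3 : ((⌈x⌉₊ : ℕ) : ℝ) + 1 ≤ k := by exact_mod_cast h
  have := Nat.le_ceil x
  linarith

lemma count_aux (m : ℕ) (a b f : ℝ) (hf : 0 ≤ f) (hb : b ≤ m) :
    (Finset.univ.filter (fun p : Fin m => a ≤ (p : ℕ) + f ∧ (p : ℕ) + f < b)).card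
      = ⌈b - f⌉₊ - ⌈a - f⌉₊ := by
  rw [← Nat.card_Ico]
  apply Finset.card_bij (fun (p : Fin m) _ => (p : ℕ))
  · intro p hp
    simp only [Finset.mem_filter, Finset.mem_univ, true_and] at hp
    rw [Finset.mem_Ico, Nat.ceil_le, Nat.lt_ceil]
    constructor <;> linarith
  · intro p _ q _ h
    exact Fin.ext h
  · intro k hk
    rw [Finset.mem_Ico, Nat.ceil_le, Nat.lt_ceil] at hk
    have : (k : ℝ) < m := by linarith
    refine ⟨⟨k, by exact_mod_cast this⟩, ?_, rfl⟩
    simp only [Finset.mem_filter, Finset.mem_univ, true_and]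
    constructor <;> linarith

lemma diff_aux (k L : ℕ) (α r f : ℝ) (h0 : 0 ≤ α) (h1 : α < 1) (r0 : 0 ≤ r) (r1 : r < 1)
    (f0 : 0 ≤ f) (f1 : f < 1) :
    ⌈k + α + (L + r) - f⌉₊ - ⌈k + α - f⌉₊ =
      if (α ≤ f ∧ f < α + r) ∨ f < α + r - 1 then L + 1 else L := by
  have A : ⌈k + α - f⌉₊ = if α ≤ f then k else k + 1 := by
    split_ifs <;> apply ceil_aux <;> push_cast <;> linarith
  have B : ⌈k + α + (L + r) - f⌉₊ =
      if α + r ≤ f then k + L else if α + r ≤ f + 1 then k + L + 1 else k + L + 2 := by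
    split_ifs <;> apply ceil_aux <;> push_cast <;> linarith
  rw [A, B]
  by_cases c1 : α ≤ f <;> by_cases c2 : α + r ≤ f <;> by_cases c3 : α + r ≤ f + 1
  all_goals first
    | (exfalso; linarith)
    | skip
  all_goals simp only [c1, c2, c3, if_true, if_false]
  all_goals split_ifs with h
  all_goals first
    | omega
    | (exfalso; rcases h with h | h <;> first | linarith | (exact h.1.elim) | (obtain ⟨h, h'⟩ := h; linarith))
    | (exfalso; apply h; left; constructor <;> first | trivial | linarith)
    | (exfalso; apply h; right; linarith)

lemma vol_aux (α r : ℝ) (h0 : 0 ≤ α) (h1 : α < 1) (r0 : 0 ≤ r) (r1 : r < 1) :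
    volume {f : ℝ | f ∈ Set.Ico (0 : ℝ) 1 ∧ ((α ≤ f ∧ f < α + r) ∨ f < α + r - 1)}
      = ENNReal.ofReal r := by
  by_cases h : α + r ≤ 1
  · have : {f : ℝ | f ∈ Set.Ico (0 : ℝ) 1 ∧ ((α ≤ f ∧ f < α + r) ∨ f < α + r - 1)}
        = Set.Ico α (α + r) := by
      ext f
      simp only [Set.mem_setOf_eq, Set.mem_Ico]
      constructor
      · rintro ⟨⟨a, b⟩, h | h⟩
        · exact h
        · exfalso; linarith
      · rintro ⟨a, b⟩
        exact ⟨⟨by linarith, by linarith⟩, Or.inl ⟨a, b⟩⟩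
    rw [this, Real.volume_Ico]
    congr 1; ring
  · push Not at h
    have : {f : ℝ | f ∈ Set.Ico (0 : ℝ) 1 ∧ ((α ≤ f ∧ f < α + r) ∨ f < α + r - 1)}
        = Set.Ico 0 (α + r - 1) ∪ Set.Ico α 1 := by
      ext f
      simp only [Set.mem_setOf_eq, Set.mem_Ico, Set.mem_union]
      constructor
      · rintro ⟨⟨a, b⟩, h | h⟩
        · exact Or.inr ⟨h.1, b⟩
        · exact Or.inl ⟨a, h⟩
      · rintro (⟨a, b⟩ | ⟨a, b⟩)
        · exact ⟨⟨by linarith, by linarith⟩, Or.inr b⟩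
        · exact ⟨⟨by linarith, by linarith⟩, Or.inl ⟨a, by linarith⟩⟩
    rw [this, measure_union _ measurableSet_Ico, Real.volume_Ico, Real.volume_Ico,
      ← ENNReal.ofReal_add (by linarith) (by linarith)]
    · congr 1; ring
    · rw [Set.disjoint_left]
      rintro f ⟨a, b⟩ ⟨c, d⟩
      linarith

/-- Wrap-around construction: given nonnegative reals
`λ₁, …, λₙ` with `∑ λᵢ ≤ m`, there is a 1-periodic measurable schedule on `m`
processors in which task `i` always occupies `⌊λᵢ⌋` or `⌊λᵢ⌋ + 1` processors,
and occupies `⌊λᵢ⌋ + 1` processors during a fraction `λᵢ − ⌊λᵢ⌋` of `[0, 1)`. -/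
theorem stmt8 (n m : ℕ) (hn : 1 ≤ n) (hm : 1 ≤ m)
    (lam : Fin n → ℝ) (hlam : ∀ i, 0 ≤ lam i)
    (hsum : ∑ i, lam i ≤ (m : ℝ)) :
    ∃ σ : ℝ → Fin m → Option (Fin n),
      Measurable σ ∧
      (∀ s : ℝ, σ (s + 1) = σ s) ∧
      ∀ i,
        (∀ s : ℝ,
          ⌊lam i⌋₊ ≤ (Finset.univ.filter (fun p => σ s p = some i)).card ∧
          (Finset.univ.filter (fun p => σ s p = some i)).card ≤ ⌊lam i⌋₊ + 1) ∧
        volume {s : ℝ | s ∈ Set.Ico (0 : ℝ) 1 ∧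
            (Finset.univ.filter (fun p => σ s p = some i)).card = ⌊lam i⌋₊ + 1}
          = ENNReal.ofReal (lam i - (⌊lam i⌋₊ : ℝ)) := by
  classical
  set S : Fin n → ℝ := fun i => ∑ j ∈ Finset.Iio i, lam j with hS
  have hS0 : ∀ i, 0 ≤ S i := fun i => Finset.sum_nonneg fun j _ => hlam j
  have hS1 : ∀ i, S i + lam i = ∑ j ∈ Finset.Iic i, lam j := by
    intro i
    rw [← Finset.Iio_insert, Finset.sum_insert (by simp), add_comm]
  have hSm : ∀ i, S i + lam i ≤ m := by
    intro i
    rw [hS1]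
    exact (Finset.sum_le_sum_of_subset_of_nonneg (Finset.subset_univ _)
      fun j _ _ => hlam j).trans hsum
  have hSlt : ∀ i j, i < j → S i + lam i ≤ S j := by
    intro i j hij
    rw [hS1]
    refine Finset.sum_le_sum_of_subset_of_nonneg ?_ fun j _ _ => hlam j
    intro k hk
    rw [Finset.mem_Iic] at hk
    rw [Finset.mem_Iio]
    exact lt_of_le_of_lt hk hij
  let P : ℝ → Fin m → Fin n → Prop := fun s p i =>
    S i ≤ (p : ℕ) + Int.fract s ∧ (p : ℕ) + Int.fract s < S i + lam i
  have huniq : ∀ s p i j, P s p i → P s p j → i = j := by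
    intro s p i j hi hj
    rcases lt_trichotomy i j with h | h | h
    · have := hSlt i j h
      have := hi.2; have := hj.1
      exfalso; linarith
    · exact h
    · have := hSlt j i h
      have := hi.1; have := hj.2
      exfalso; linarith
  let σ : ℝ → Fin m → Option (Fin n) := fun s p =>
    if h : ∃ i, P s p i then some h.choose else none
  have hσ : ∀ s p i, σ s p = some i ↔ P s p i := by
    intro s p i
    by_cases h : ∃ i, P s p i
    · simp only [σ, dif_pos h, Option.some.injEq]
      constructor
      · rintro rfl
        exact h.choose_spec
      · intro hi
        exact huniq s p _ _ h.choose_spec hi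
    · simp only [σ, dif_neg h]
      constructor
      · intro h; cases h
      · intro hi; exact absurd ⟨i, hi⟩ h
  have hmeas : ∀ p i, MeasurableSet {s | σ s p = some i} := by
    intro p i
    simp only [hσ]
    have hm1 : Measurable fun s : ℝ => ((p : ℕ) : ℝ) + Int.fract s :=
      measurable_const.add measurable_fract
    exact (measurableSet_le measurable_const hm1).inter (measurableSet_lt hm1 measurable_const)
  have hcount : ∀ i s, (Finset.univ.filter (fun p => σ s p = some i)).card =
      if (Int.fract (S i) ≤ Int.fract s ∧
        Int.fract s < Int.fract (S i) + (lam i - (⌊lam i⌋₊ : ℝ))) ∨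
        Int.fract s < Int.fract (S i) + (lam i - (⌊lam i⌋₊ : ℝ)) - 1
      then ⌊lam i⌋₊ + 1 else ⌊lam i⌋₊ := by
    intro i s
    have e1 : (⌊S i⌋₊ : ℝ) + Int.fract (S i) = S i := by
      rw [natCast_floor_eq_intCast_floor (hS0 i)]
      exact Int.floor_add_fract _
    have key := diff_aux ⌊S i⌋₊ ⌊lam i⌋₊ (Int.fract (S i)) (lam i - (⌊lam i⌋₊ : ℝ)) (Int.fract s)
      (Int.fract_nonneg _) (Int.fract_lt_one _) (sub_nonneg.2 (Nat.floor_le (hlam i)))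
      (by have := Nat.lt_floor_add_one (lam i); linarith)
      (Int.fract_nonneg _) (Int.fract_lt_one _)
    rw [e1, add_sub_cancel] at key
    rw [← key, ← count_aux m _ _ _ (Int.fract_nonneg s) (hSm i)]
    congr 1
    ext p
    simp only [Finset.mem_filter, Finset.mem_univ, true_and]
    exact hσ s p i
  refine ⟨σ, ?_, ?_, ?_⟩
  · rw [measurable_pi_iff]
    intro p
    apply measurable_to_countable'
    intro x
    cases x with
    | some i => exact hmeas p i
    | none =>
      have : (fun s => σ s p) ⁻¹' {none} = (⋃ i, {s | σ s p = some i})ᶜ := by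
        ext s
        simp only [Set.mem_preimage, Set.mem_singleton_iff, Set.mem_compl_iff, Set.mem_iUnion,
          Set.mem_setOf_eq]
        cases σ s p <;> simp
      rw [this]
      exact (MeasurableSet.iUnion fun i => hmeas p i).compl
  · intro s
    simp only [σ, P, Int.fract_add_one]
  · intro i
    refine ⟨?_, ?_⟩
    · intro s
      rw [hcount]
      split_ifs <;> omega
    · rw [← vol_aux (Int.fract (S i)) (lam i - (⌊lam i⌋₊ : ℝ))
        (Int.fract_nonneg _) (Int.fract_lt_one _) (sub_nonneg.2 (Nat.floor_le (hlam i)))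
        (by have := Nat.lt_floor_add_one (lam i); linarith)]
      congr 1
      ext s
      simp only [Set.mem_setOf_eq]
      refine and_congr_right fun hs => ?_
      rw [hcount, Int.fract_eq_self.2 hs]
      split_ifs with h
      · simp [h]
      · simp [h]
end

section
/- (Reduction with static processor assignment, limiting migrations.) Consider n sporadic implicit-deadline tasks on m identical processors; task i has an integer period T_i ≥ 1, a worst-case execution time C_i > 0, utilization u_i = C_i/T_i with u_i ≤ γ_i(m), where γ_i is a work-limited parallelism profile on m processors; let k_i = 0 if u_i ≤ γ_i(1) and otherwise k_i = max{1 ≤ j ≤ m : γ_i(j) < u_i}, let ℓ_i = (u_i − γ_i(k_i))/(γ_i(k_i+1) − γ_i(k_i)) and λ_i = k_i + ℓ_i. If λ_1 + ⋯ + λ_n ≤ m, then there exist pairwise disjoint subsets S_1, …, S_n of the m processors with |S_i| = k_i for each i, together with a 1-periodic measurable schedule σ : ℝ → (Fin m → Option (Fin n)) such that: (a) σ(s)(p) = some i for every time s and every processor p ∈ S_i (task i is statically and permanently assigned the k_i processors of S_i); (b) at every time s, at most one processor outside S_1 ∪ ⋯ ∪ S_n is assigned to task i; and (c) for every task i and every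 real t, the integral over [t, t + T_i) of s ↦ γ_i(c_i(s)) is at least C_i, where c_i(s) is the total number of processors assigned to i at time s. -/
open MeasureTheory

noncomputable section

def offs {n : ℕ} {R : Type*} [AddCommMonoid R] (f : Fin n → R) (i : Fin n) : R :=
  ∑ j ∈ Finset.Iio i, f j

lemma offs_add_le_sum {n : ℕ} (f : Fin n → ℝ) (hf : ∀ i, 0 ≤ f i) (i : Fin n) :
    offs f i + f i ≤ ∑ j, f j := by
  classical
  unfold offs
  rw [add_comm, ← Finset.sum_insert (by simp)]
  exact Finset.sum_le_sum_of_subset_of_nonneg (Finset.subset_univ _) (fun j _ _ => hf j)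

lemma offs_add_le {n : ℕ} (f : Fin n → ℝ) (hf : ∀ i, 0 ≤ f i) {i j : Fin n} (h : i < j) :
    offs f i + f i ≤ offs f j := by
  classical
  unfold offs
  rw [add_comm, ← Finset.sum_insert (by simp)]
  refine Finset.sum_le_sum_of_subset_of_nonneg ?_ (fun j _ _ => hf j)
  intro a ha
  simp only [Finset.mem_insert, Finset.mem_Iio] at ha ⊢
  rcases ha with rfl | ha
  · exact h
  · exact ha.trans h

lemma offs_unique {n : ℕ} (f : Fin n → ℝ) (hf : ∀ i, 0 ≤ f i) {i j : Fin n} {x : ℝ}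
    (hi : offs f i ≤ x ∧ x < offs f i + f i) (hj : offs f j ≤ x ∧ x < offs f j + f j) :
    i = j := by
  rcases lt_trichotomy i j with h | h | h
  · have := offs_add_le f hf h
    linarith [hi.1, hi.2, hj.1, hj.2]
  · exact h
  · have := offs_add_le f hf h
    linarith [hi.1, hi.2, hj.1, hj.2]

open Classical in
def locate {n : ℕ} (f : Fin n → ℝ) (x : ℝ) : Option (Fin n) :=
  if h : ∃ i, offs f i ≤ x ∧ x < offs f i + f i then some h.choose else none

lemma locate_eq_some {n : ℕ} (f : Fin n → ℝ) (hf : ∀ i, 0 ≤ f i) (x : ℝ) (i : Fin n) :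
    locate f x = some i ↔ (offs f i ≤ x ∧ x < offs f i + f i) := by
  unfold locate
  split_ifs with h
  · constructor
    · intro h1
      have h2 := h.choose_spec
      rw [Option.some.inj h1] at h2
      exact h2
    · intro h1
      rw [offs_unique f hf h.choose_spec h1]
  · constructor
    · intro h1; cases h1
    · intro h1; exact (h ⟨i, h1⟩).elim

lemma locate_measurable {n : ℕ} (f : Fin n → ℝ) (hf : ∀ i, 0 ≤ f i) :
    Measurable (locate f) := by
  have hs : ∀ i, MeasurableSet (locate f ⁻¹' {some i}) := by
    intro i
    have : locate f ⁻¹' {some i} = Set.Ico (offs f i) (offs f i + f i) := by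
      ext x
      simp [locate_eq_some f hf]
    rw [this]
    exact measurableSet_Ico
  apply measurable_to_countable'
  intro o
  cases o with
  | some i => exact hs i
  | none =>
    have : locate f ⁻¹' {none} = (⋃ i, locate f ⁻¹' {some i})ᶜ := by
      ext x
      cases h : locate f x <;> simp [h]
    rw [this]
    exact (MeasurableSet.iUnion hs).compl

/-- Integral of the periodic indicator. -/
lemma fract_integral (b l : ℝ) (hl0 : 0 ≤ l) (hl1 : l ≤ 1) (A D t : ℝ) (T : ℕ) :
    ∫ s in Set.Ico t (t + (T : ℝ)), (if Int.fract (s - b) < l then D else A)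
      = T * (A + (D - A) * l) := by
  set g : ℝ → ℝ := fun s => if Int.fract (s - b) < l then D else A with hg
  have hper : Function.Periodic g 1 := by
    intro s
    simp only [hg]
    rw [show s + 1 - b = s - b + 1 by ring, Int.fract_add_one]
  have hmeas : Measurable g := by
    refine Measurable.ite ?_ measurable_const measurable_const
    exact measurableSet_lt ((measurable_id.sub_const b).fract) measurable_const
  have hint : ∀ x y, IntervalIntegrable g volume x y := by
    intro x y
    rw [intervalIntegrable_iff]
    refine Measure.integrableOn_of_bounded (M := max |D| |A|) (by simp) hmeas.aestronglyMeasurable ?_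
    refine Filter.Eventually.of_forall fun s => ?_
    simp only [hg]
    split_ifs <;> simp
  have h1 : ∫ s in b..(b+1), g s = A + (D - A) * l := by
    rw [← intervalIntegral.integral_add_adjacent_intervals (hint b (b+l)) (hint (b+l) (b+1))]
    have e1 : ∫ s in b..(b+l), g s = ∫ s in b..(b+l), D := by
      apply intervalIntegral.integral_congr_Ioo_of_le (by linarith)
      intro s hs
      have : Int.fract (s - b) = s - b := Int.fract_eq_self.2 ⟨by linarith [hs.1], by linarith [hs.2]⟩
      simp only [hg, this]
      rw [if_pos (by linarith [hs.2])]
    have e2 : ∫ s in (b+l)..(b+1), g s = ∫ s in (b+l)..(b+1), A := by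
      apply intervalIntegral.integral_congr_Ioo_of_le (by linarith)
      intro s hs
      have : Int.fract (s - b) = s - b := Int.fract_eq_self.2 ⟨by linarith [hs.1], by linarith [hs.2]⟩
      simp only [hg, this]
      rw [if_neg (by linarith [hs.1])]
    rw [e1, e2]
    simp
    ring
  have h2 := hper.intervalIntegral_add_zsmul_eq (T : ℤ) t (fun x y => hint x y)
  rw [integral_Ico_eq_integral_Ioc, ← intervalIntegral.integral_of_le (by simp)]
  have h3 := hper.intervalIntegral_add_eq 0 b
  simp only [zsmul_eq_mul, Int.cast_natCast, mul_one] at h2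
  rw [h2, hper.intervalIntegral_add_eq t b, h1]

lemma extra_card (m K : ℕ) (b l s : ℝ) (hb : 0 ≤ b) (hl1 : l ≤ 1)
    (hbl : b + l ≤ (m : ℝ) - K) :
    (Finset.univ.filter (fun p : Fin m => K ≤ p.val ∧
      b ≤ ((p.val : ℝ) - K) + Int.fract s ∧ ((p.val : ℝ) - K) + Int.fract s < b + l)).card
      = if Int.fract (s - b) < l then 1 else 0 := by
  have f0 := Int.fract_nonneg s
  have f1 := Int.fract_lt_one s
  have g0 := Int.fract_nonneg (s - b)
  have g1 := Int.fract_lt_one (s - b)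
  have es := Int.floor_add_fract s
  have eg := Int.floor_add_fract (s - b)
  split_ifs with h
  · obtain ⟨q, hq⟩ : ∃ q : ℤ, q = ⌊s⌋ - ⌊s - b⌋ := ⟨_, rfl⟩
    have hq' : (q : ℝ) = ⌊s⌋ - ⌊s - b⌋ := by rw [hq]; push_cast; ring
    have q0 : 0 ≤ q := by
      have : (-1 : ℝ) < q := by linarith
      have : (-1 : ℤ) < q := by exact_mod_cast this
      omega
    lift q to ℕ using q0
    have hq'' : (q : ℝ) = ⌊s⌋ - ⌊s - b⌋ := by exact_mod_cast hq'
    have qm : K + q < m := by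
      have : (K : ℝ) + q < m := by linarith
      exact_mod_cast this
    rw [Finset.card_eq_one]
    refine ⟨⟨K + q, qm⟩, ?_⟩
    ext p
    simp only [Finset.mem_filter, Finset.mem_univ, true_and, Finset.mem_singleton, Fin.ext_iff]
    constructor
    · rintro ⟨h1, h2, h3⟩
      have a1 : (p.val : ℝ) < K + q + 1 := by linarith
      have a2 : ((K : ℝ) + q) < p.val + 1 := by linarith
      have a1 : p.val < K + q + 1 := by exact_mod_cast a1
      have a2 : K + q < p.val + 1 := by exact_mod_cast a2
      omega
    · intro hp
      rw [hp]
      push_cast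
      refine ⟨by omega, by linarith, by linarith⟩
  · rw [Finset.card_eq_zero, Finset.filter_eq_empty_iff]
    rintro p - ⟨h1, h2, h3⟩
    apply h
    have : Int.fract (s - b) = (p.val : ℝ) - K + Int.fract s - b := by
      rw [Int.fract_eq_iff]
      refine ⟨by linarith, by linarith, ⌊s⌋ - (p.val - K), ?_⟩
      push_cast
      linarith
    rw [this]; linarith

end

/-- Reduction with static processor assignment, limiting
migrations: if `∑ λᵢ ≤ m`, there are pairwise disjoint sets `Sᵢ` of processors
with `|Sᵢ| = kᵢ` and a 1-periodic measurable schedule in which task `i` runs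
permanently on all processors of `Sᵢ`, uses at most one processor outside
`S₁ ∪ ⋯ ∪ Sₙ` at any time, and receives at least `Cᵢ` units of execution in
every window `[t, t + Tᵢ)`. -/
theorem stmt9 (n m : ℕ) (hn : 1 ≤ n) (hm : 1 ≤ m)
    (γ : Fin n → ℕ → ℝ)
    (h0 : ∀ i, γ i 0 = 0)
    (hmono : ∀ i, ∀ j : ℕ, j < m → γ i j < γ i (j + 1))
    (hratio : ∀ i, ∀ j j' : ℕ, 1 ≤ j → j < j' → j' ≤ m →
      γ i j' / γ i j < (j' : ℝ) / (j : ℝ))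
    (hconv : ∀ i, ∀ j j' : ℕ, 1 ≤ j → j < j' → j' < m →
      γ i (j' + 1) - γ i j' ≤ γ i (j + 1) - γ i j)
    (T : Fin n → ℕ) (hT : ∀ i, 1 ≤ T i)
    (C : Fin n → ℝ) (hC : ∀ i, 0 < C i)
    (u : Fin n → ℝ) (hu : ∀ i, u i = C i / (T i : ℝ))
    (hum : ∀ i, u i ≤ γ i m)
    (k : Fin n → ℕ)
    (hk : ∀ i, k i = if u i ≤ γ i 1 then 0
      else Nat.findGreatest (fun j => γ i j < u i) m)
    (ℓ : Fin n → ℝ)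
    (hℓ : ∀ i, ℓ i = (u i - γ i (k i)) / (γ i (k i + 1) - γ i (k i)))
    (lam : Fin n → ℝ)
    (hlam : ∀ i, lam i = (k i : ℝ) + ℓ i)
    (hfeas : ∑ i, lam i ≤ (m : ℝ)) :
    ∃ (S : Fin n → Finset (Fin m)) (σ : ℝ → Fin m → Option (Fin n)),
      (∀ i i', i ≠ i' → Disjoint (S i) (S i')) ∧
      (∀ i, (S i).card = k i) ∧
      Measurable σ ∧
      (∀ s : ℝ, σ (s + 1) = σ s) ∧
      (∀ i, ∀ s : ℝ, ∀ p ∈ S i, σ s p = some i) ∧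
      (∀ i, ∀ s : ℝ,
        (Finset.univ.filter
          (fun p => p ∉ Finset.univ.biUnion S ∧ σ s p = some i)).card ≤ 1) ∧
      (∀ i, ∀ t : ℝ, C i ≤ ∫ s in Set.Ico t (t + (T i : ℝ)),
        γ i ((Finset.univ.filter (fun p => σ s p = some i)).card)) := by
  classical
  have key : ∀ i, k i < m ∧ γ i (k i) < u i ∧ u i ≤ γ i (k i + 1) := by
    intro i
    have hu0 : 0 < u i := by
      rw [hu]
      exact div_pos (hC i) (by exact_mod_cast hT i)
    rw [hk]
    split_ifs with h
    · exact ⟨hm, by rw [h0]; exact hu0, h⟩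
    · push Not at h
      have a1 : γ i (Nat.findGreatest (fun j => γ i j < u i) m) < u i :=
        Nat.findGreatest_spec (P := fun j => γ i j < u i) hm h
      have a2 : Nat.findGreatest (fun j => γ i j < u i) m < m := by
        refine lt_of_le_of_ne (Nat.findGreatest_le m) ?_
        intro he
        rw [he] at a1
        linarith [hum i]
      refine ⟨a2, a1, ?_⟩
      have := Nat.findGreatest_is_greatest (P := fun j => γ i j < u i)
        (Nat.lt_succ_self (Nat.findGreatest (fun j => γ i j < u i) m)) a2
      exact not_lt.1 this
  have hD : ∀ i, 0 < γ i (k i + 1) - γ i (k i) := fun i => sub_pos.2 (hmono i _ (key i).1)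
  have hl0 : ∀ i, 0 ≤ ℓ i := by
    intro i
    rw [hℓ]
    exact div_nonneg (by linarith [(key i).2.1]) (hD i).le
  have hl1 : ∀ i, ℓ i ≤ 1 := by
    intro i
    rw [hℓ, div_le_one (hD i)]
    linarith [(key i).2.2]
  have hle : ∀ i, γ i (k i) + (γ i (k i + 1) - γ i (k i)) * ℓ i = u i := by
    intro i
    rw [hℓ, mul_div_cancel₀ _ (hD i).ne']
    ring
  obtain ⟨K, hK⟩ : ∃ K : ℕ, K = ∑ i, k i := ⟨_, rfl⟩
  have hsum : (K : ℝ) + ∑ i, ℓ i ≤ m := by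
    have : ∑ i, lam i = (K : ℝ) + ∑ i, ℓ i := by
      simp only [hlam, Finset.sum_add_distrib, hK, Nat.cast_sum]
    linarith
  have hKm : K ≤ m := by
    have : (K : ℝ) ≤ m := by linarith [Finset.sum_nonneg (fun i (_ : i ∈ Finset.univ) => hl0 i)]
    exact_mod_cast this
  let kr : Fin n → ℝ := fun i => (k i : ℝ)
  have hkr : ∀ i, 0 ≤ kr i := fun i => Nat.cast_nonneg _
  have hoff : ∀ i, offs kr i = ((offs k i : ℕ) : ℝ) := by
    intro i; simp [offs, kr]
  have hoffK : ∀ i, offs k i + k i ≤ K := by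
    intro i
    have := offs_add_le_sum kr hkr i
    rw [hoff] at this
    rw [hK]
    simp only [kr] at this
    exact_mod_cast this
  let S : Fin n → Finset (Fin m) := fun i =>
    Finset.attachFin (Finset.Ico (offs k i) (offs k i + k i))
      (fun x hx => lt_of_lt_of_le (Finset.mem_Ico.1 hx).2 ((hoffK i).trans hKm))
  have hS : ∀ i (p : Fin m), p ∈ S i ↔ (p.val < K ∧ locate kr p.val = some i) := by
    intro i p
    rw [locate_eq_some kr hkr, hoff]
    simp only [S, Finset.mem_attachFin, Finset.mem_Ico, kr]
    have := hoffK i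
    constructor
    · rintro ⟨h1, h2⟩
      exact ⟨by omega, by exact_mod_cast h1, by exact_mod_cast h2⟩
    · rintro ⟨-, h1, h2⟩
      exact ⟨by exact_mod_cast h1, by exact_mod_cast h2⟩
  let σ : ℝ → Fin m → Option (Fin n) := fun s p =>
    if p.val < K then locate kr p.val else locate ℓ (((p.val : ℝ) - K) + Int.fract s)
  have hScard : ∀ i, (S i).card = k i := by
    intro i; simp [S]
  let B : Fin n → ℝ → Finset (Fin m) := fun i s =>
    Finset.univ.filter (fun p : Fin m => K ≤ p.val ∧
      offs ℓ i ≤ ((p.val : ℝ) - K) + Int.fract s ∧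
      ((p.val : ℝ) - K) + Int.fract s < offs ℓ i + ℓ i)
  have hBcard : ∀ i s, (B i s).card = if Int.fract (s - offs ℓ i) < ℓ i then 1 else 0 := by
    intro i s
    apply extra_card
    · exact Finset.sum_nonneg (fun j _ => hl0 j)
    · exact hl1 i
    · linarith [offs_add_le_sum ℓ hl0 i]
  have hσ : ∀ i s p, σ s p = some i ↔ (p ∈ S i ∨ p ∈ B i s) := by
    intro i s p
    rw [hS]
    simp only [σ, B, Finset.mem_filter, Finset.mem_univ, true_and]
    by_cases h : p.val < K
    · simp [h]
    · simp [h, locate_eq_some ℓ hl0, not_lt.1 h]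
  refine ⟨S, σ, ?_, hScard, ?_, ?_, ?_, ?_, ?_⟩
  · intro i i' hne
    rw [Finset.disjoint_left]
    intro p hp hp'
    have h1 := ((hS i p).1 hp).2
    have h2 := ((hS i' p).1 hp').2
    rw [h1] at h2
    exact hne (Option.some.inj h2)
  · refine measurable_pi_iff.2 fun p => ?_
    by_cases h : p.val < K
    · simp only [σ, h, if_true]
      exact measurable_const
    · simp only [σ, h, if_false]
      exact (locate_measurable ℓ hl0).comp (measurable_const.add measurable_fract)
  · intro s
    simp only [σ, Int.fract_add_one]
  · intro i s p hp
    exact (hσ i s p).2 (Or.inl hp)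
  · intro i s
    refine le_trans (Finset.card_le_card (t := B i s) ?_) ?_
    · intro p hp
      simp only [Finset.mem_filter, Finset.mem_univ, true_and, Finset.mem_biUnion, not_exists] at hp
      exact ((hσ i s p).1 hp.2).resolve_left (hp.1 i)
    · rw [hBcard]; split_ifs <;> simp
  · intro i t
    have hc : ∀ s, (Finset.univ.filter (fun p => σ s p = some i)).card
        = k i + if Int.fract (s - offs ℓ i) < ℓ i then 1 else 0 := by
      intro s
      rw [← hBcard, ← hScard i, ← Finset.card_union_of_disjoint]
      · congr 1
        ext p
        simp [hσ]
      · rw [Finset.disjoint_left]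
        intro p hp hp'
        have h1 := ((hS i p).1 hp).1
        have h2 := (Finset.mem_filter.1 hp').2.1
        omega
    have he : ∀ s, γ i ((Finset.univ.filter (fun p => σ s p = some i)).card)
        = if Int.fract (s - offs ℓ i) < ℓ i then γ i (k i + 1) else γ i (k i) := by
      intro s
      rw [hc]
      split_ifs <;> simp
    simp only [he]
    rw [fract_integral _ _ (hl0 i) (hl1 i), hle, hu]
    have : (T i : ℝ) ≠ 0 := by
      have := hT i
      positivity
    rw [mul_div_cancel₀ _ this]
end
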